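/- Let I ⊆ ℝ be an interval and f : (0,∞) → (0,∞) be continuous. Assume: (1) for every p ∈ I the integral F_p(x) = ∫₀^∞ t^p f(t) e^{−xt} dt converges for all x > 0; (2) there exist constants M > 0 and c ≥ 0 such that 0 < t^p f(t) ≤ M e^{ct} for all t > 0 and all p ∈ I; (3) the n-tuples p = (p₁,…,pₙ) and q = (q₁,…,qₙ) ∈ Iⁿ with n ≥ 2 satisfy p ≺ q. If there is a real number θ < 1 + min{pₙ, qₙ} such that t ↦ t^θ f(t) is log-convex on (0,∞), then the function x ↦ λ ∏_{j=1}^n F_{q_j}(x) − ∏_{j=1}^n F_{p_j}(x), where λ = ∏_{j=1}^n Γ(p_j − θ + 1)/Γ(q_j − θ + 1), is completely monotonic on (0,∞). -/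

import Mathlib

/-!
`LapF f p` is the Laplace transform of the measure `t ^ p * f t dt` on `(0, ∞)`, so a product of two
such functions is the Laplace transform of a convolution, and it is enough to compare convolution
densities: a Laplace transform of a positive measure is completely monotonic
(`completelyMonotonicOn_laplace_sub`).

For two factors with `a₁ + a₂ = b₁ + b₂` and `b₂ ≤ a₂ ≤ a₁ ≤ b₁`, write `t ^ p * f t` as
`t ^ (p - θ) * g t` with `g t = t ^ θ * f t` log-convex. After symmetrization under `t ↦ r - t`, the
density at `r` of the convolution for `(a₁, a₂)` is half the integral over `(0, r)` of `A t * G t`,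
with `G t = g t * g (r - t)` and `A t = t ^ α₁ * (r - t) ^ α₂ + t ^ α₂ * (r - t) ^ α₁`,
`αᵢ = aᵢ - θ`; let `B` be the analogue of `A` for `(b₁, b₂)`. Log-convexity makes `G` increase with
`|t - r / 2|`. So does `B / A`, which equals `cosh (v * y) / cosh (u * y)` with
`y = log t - log (r - t)`, `u = (a₁ - a₂) / 2` and `v = (b₁ - b₂) / 2`, where `0 ≤ u ≤ v`.
Chebyshev's association inequality gives
`∫ B * ∫ A G ≤ ∫ A * ∫ B G`, and `∫ A`, `∫ B` are Beta integrals whose ratio is the ratio of Gamma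
values in the statement (`lconvolution_lapDensity_le`).

The general case follows because majorization is a finite chain of transfers between two coordinates
(`completelyMonotonicOn_prod_sub_prod`), applied to the normalized functions
`LapF f p x / Γ(p - θ + 1)`: each transfer changes the product by a two-factor difference times a
completely monotonic product. The parameters met on the way stay in `I ∩ (θ - 1, ∞)`, which is order
connected.
-/

open Real MeasureTheory Set Filter

/-- A function is completely monotonic on `(0, ∞)` if it is infinitely differentiable there
and `(-1)^m h^(m)(x) ≥ 0` for all `m ∈ ℕ` and `x > 0`. -/
def CompletelyMonotonicOn (h : ℝ → ℝ) : Prop :=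
  ContDiffOn ℝ (⊤ : ℕ∞) h (Set.Ioi 0) ∧
  ∀ (m : ℕ) (x : ℝ), 0 < x → 0 ≤ (-1 : ℝ) ^ m * iteratedDerivWithin m h (Set.Ioi 0) x

/-- `p ≺ q` : `p` is (strictly) majorized by `q`. -/
def Majorizes {n : ℕ} (p q : Fin n → ℝ) : Prop :=
  (∀ i j : Fin n, i ≤ j → p j ≤ p i) ∧
  (∀ i j : Fin n, i ≤ j → q j ≤ q i) ∧
  (∀ k : Fin n, ∑ j ∈ Finset.univ.filter (fun j => j ≤ k), p j ≤
      ∑ j ∈ Finset.univ.filter (fun j => j ≤ k), q j) ∧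
  (∑ j, p j = ∑ j, q j) ∧ p ≠ q

/-- `F_p(x) = ∫₀^∞ t^p f(t) e^{-xt} dt`. -/
noncomputable def LapF (f : ℝ → ℝ) (p x : ℝ) : ℝ :=
  ∫ t in Set.Ioi (0 : ℝ), t ^ p * f t * Real.exp (-x * t)


/-! ### Closure properties of completely monotonic functions -/

lemma CompletelyMonotonicOn.add {f g : ℝ → ℝ} (hf : CompletelyMonotonicOn f)
    (hg : CompletelyMonotonicOn g) : CompletelyMonotonicOn (fun x => f x + g x) := by
  refine ⟨hf.1.add hg.1, fun m x hx => ?_⟩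
  have hx' : x ∈ Set.Ioi (0 : ℝ) := hx
  rw [iteratedDerivWithin_fun_add hx' isOpen_Ioi.uniqueDiffOn
    ((hf.1 x hx').of_le (by exact_mod_cast le_top)) ((hg.1 x hx').of_le (by exact_mod_cast le_top)),
    mul_add]
  exact add_nonneg (hf.2 m x hx) (hg.2 m x hx)

lemma CompletelyMonotonicOn.const_mul {f : ℝ → ℝ} (hf : CompletelyMonotonicOn f)
    {c : ℝ} (hc : 0 ≤ c) : CompletelyMonotonicOn (fun x => c * f x) := by
  refine ⟨contDiffOn_const.mul hf.1, fun m x hx => ?_⟩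
  have hx' : x ∈ Set.Ioi (0 : ℝ) := hx
  rw [iteratedDerivWithin_const_mul hx' isOpen_Ioi.uniqueDiffOn c
    ((hf.1 x hx').of_le (by exact_mod_cast le_top))]
  have := mul_nonneg hc (hf.2 m x hx)
  linarith

lemma CompletelyMonotonicOn.mul {f g : ℝ → ℝ} (hf : CompletelyMonotonicOn f)
    (hg : CompletelyMonotonicOn g) : CompletelyMonotonicOn (fun x => f x * g x) := by
  refine ⟨hf.1.mul hg.1, fun m x hx => ?_⟩
  have hx' : x ∈ Set.Ioi (0 : ℝ) := hx
  change 0 ≤ (-1 : ℝ) ^ m * iteratedDerivWithin m (f * g) (Set.Ioi 0) x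
  rw [iteratedDerivWithin_mul hx' isOpen_Ioi.uniqueDiffOn
    ((hf.1 x hx').of_le (by exact_mod_cast le_top)) ((hg.1 x hx').of_le (by exact_mod_cast le_top)),
    Finset.mul_sum]
  refine Finset.sum_nonneg fun i hi => ?_
  have hi' : i ≤ m := Nat.lt_succ_iff.mp (Finset.mem_range.mp hi)
  have h1 : (-1 : ℝ) ^ m = (-1) ^ i * (-1) ^ (m - i) := by
    rw [← pow_add, Nat.add_sub_cancel' hi']
  have := mul_nonneg (mul_nonneg (Nat.cast_nonneg (α := ℝ) (m.choose i)) (hf.2 i x hx))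
    (hg.2 (m - i) x hx)
  rw [h1]
  linarith

lemma completelyMonotonicOn_const {c : ℝ} (hc : 0 ≤ c) :
    CompletelyMonotonicOn (fun _ => c) := by
  refine ⟨contDiffOn_const, fun m x _ => ?_⟩
  rw [iteratedDerivWithin_const]
  split_ifs with h <;> simp [h, hc]

lemma CompletelyMonotonicOn.prod {ι : Type*} (s : Finset ι) {f : ι → ℝ → ℝ}
    (hf : ∀ i ∈ s, CompletelyMonotonicOn (f i)) :
    CompletelyMonotonicOn (fun x => ∏ i ∈ s, f i x) := by
  classical
  induction s using Finset.induction_on with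
  | empty => simpa using completelyMonotonicOn_const zero_le_one
  | insert a s ha ih =>
    simp only [Finset.prod_insert ha]
    exact (hf a (Finset.mem_insert_self a s)).mul
      (ih fun i hi => hf i (Finset.mem_insert_of_mem hi))

/-! ### Reduction of majorization to transfers between two coordinates -/

/-- If moving two parameters closer together, with their sum fixed, decreases the product of two
members of the family `H` in the completely monotonic order, then so does majorization of
`n`-tuples. Only `p` needs to be sorted. The induction is on the number of coordinates where `p`
and `q` differ: each step transfers mass from a coordinate `j` with `p j < q j` to the first
coordinate `k` with `q k < p k`, until one of them agrees with `p`. -/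
lemma completelyMonotonicOn_prod_sub_prod {n : ℕ} {J : Set ℝ} (hJ : J.OrdConnected)
    (H : ℝ → ℝ → ℝ) (hH : ∀ a ∈ J, CompletelyMonotonicOn (H a))
    (h2 : ∀ a₁ ∈ J, ∀ a₂ ∈ J, ∀ b₁ ∈ J, ∀ b₂ ∈ J, b₂ ≤ a₂ → a₂ ≤ a₁ → a₁ ≤ b₁ →
      a₁ + a₂ = b₁ + b₂ → CompletelyMonotonicOn (fun x => H b₁ x * H b₂ x - H a₁ x * H a₂ x))
    (p : Fin n → ℝ) (hp : Antitone p) (N : ℕ) : ∀ q : Fin n → ℝ, (∀ j, q j ∈ J) →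
      (Finset.univ.filter (fun j => q j ≠ p j)).card ≤ N →
      (∀ k : Fin n, ∑ j ∈ Finset.univ.filter (fun j => j ≤ k), p j ≤
        ∑ j ∈ Finset.univ.filter (fun j => j ≤ k), q j) → ∑ j, p j = ∑ j, q j →
      CompletelyMonotonicOn (fun x => ∏ j, H (q j) x - ∏ j, H (p j) x) := by
  induction N with
  | zero =>
    intro q _ hN _ _
    have : q = p := by
      ext j
      by_contra h
      have : j ∈ Finset.univ.filter (fun j => q j ≠ p j) := by simp [h]
      rw [Finset.card_eq_zero.mp (Nat.le_zero.mp hN)] at this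
      simp at this
    subst this
    simpa using completelyMonotonicOn_const le_rfl
  | succ N ih =>
    intro q hq hN hpre hsum
    by_cases hqp : q = p
    · subst hqp
      simpa using completelyMonotonicOn_const le_rfl
    -- equal totals and `q ≠ p` force some coordinate to satisfy `q < p`
    have hex : ∃ k, q k < p k := by
      by_contra! hcon
      refine hqp (funext fun i => ?_)
      exact ((Finset.sum_eq_sum_iff_of_le fun i _ => hcon i).mp hsum i (Finset.mem_univ i)).symm
    obtain ⟨k, hk, hkmin⟩ : ∃ k, q k < p k ∧ ∀ i < k, p i ≤ q i := by
      obtain ⟨k, hk⟩ := (Set.toFinite {k | q k < p k}).exists_minimal hex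
      refine ⟨k, hk.1, fun i hi => ?_⟩
      by_contra! hlt
      exact absurd (hk.2 hlt hi.le) (not_le.mpr hi)
    obtain ⟨j, hjk, hj⟩ : ∃ j, j < k ∧ p j < q j := by
      by_contra! hcon
      refine absurd (hpre k) (not_le.mpr ?_)
      refine Finset.sum_lt_sum (fun i hi => ?_) ⟨k, by simp, hk⟩
      rcases (Finset.mem_filter.mp hi).2.lt_or_eq with h | h
      · exact hcon i h
      · rw [h]; exact hk.le
    set δ := min (q j - p j) (p k - q k) with hδ
    have hδj : δ ≤ q j - p j := min_le_left _ _
    have hδk : δ ≤ p k - q k := min_le_right _ _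
    have hδ0 : 0 < δ := lt_min (by linarith) (by linarith)
    have hpjk : p k ≤ p j := hp hjk.le
    set q' : Fin n → ℝ := fun i => q i + (if i = j then -δ else 0) + (if i = k then δ else 0)
      with hq'
    have hq'j : q' j = q j - δ := by simp [hq', hjk.ne]; ring
    have hq'k : q' k = q k + δ := by simp [hq', hjk.ne']
    have hq'i : ∀ i, i ≠ j → i ≠ k → q' i = q i := fun i h1 h2 => by simp [hq', h1, h2]
    have hq'sum : ∀ s : Finset (Fin n), ∑ i ∈ s, q' i =
        ∑ i ∈ s, q i + (if j ∈ s then -δ else 0) + (if k ∈ s then δ else 0) := fun s => by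
      simp [hq', Finset.sum_add_distrib, Finset.sum_ite_eq']
    have hjJ : q' j ∈ J := hJ.out (hq k) (hq j) ⟨by linarith, by linarith⟩
    have hkJ : q' k ∈ J := hJ.out (hq k) (hq j) ⟨by linarith, by linarith⟩
    have hq'J : ∀ i, q' i ∈ J := fun i => by
      by_cases h1 : i = j
      · exact h1 ▸ hjJ
      by_cases h2 : i = k
      · exact h2 ▸ hkJ
      rw [hq'i i h1 h2]; exact hq i
    have hcard : (Finset.univ.filter (fun i => q' i ≠ p i)).card ≤ N := by
      have hss : Finset.univ.filter (fun i => q' i ≠ p i) ⊂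
          Finset.univ.filter (fun i => q i ≠ p i) := by
        rw [Finset.ssubset_iff_of_subset]
        · rcases min_choice (q j - p j) (p k - q k) with h | h
          · exact ⟨j, by simp [hj.ne'], by simp [hq'j]; linarith⟩
          · exact ⟨k, by simp [hk.ne], by simp [hq'k]; linarith⟩
        · intro i hi
          simp only [Finset.mem_filter, Finset.mem_univ, true_and] at hi ⊢
          by_cases h1 : i = j
          · subst h1; exact hj.ne'
          by_cases h2 : i = k
          · subst h2; exact hk.ne
          rwa [hq'i i h1 h2] at hi
      have := Finset.card_lt_card hss
      omega
    have hpre' : ∀ m : Fin n, ∑ i ∈ Finset.univ.filter (fun i => i ≤ m), p i ≤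
        ∑ i ∈ Finset.univ.filter (fun i => i ≤ m), q' i := fun m => by
      rw [hq'sum]
      simp only [Finset.mem_filter, Finset.mem_univ, true_and]
      have := hpre m
      by_cases h1 : k ≤ m
      · simp only [h1, hjk.le.trans h1, if_true]; linarith
      by_cases h2 : j ≤ m
      · simp only [h1, h2, if_true, if_false]
        -- all increments `q i - p i` up to `m < k` are nonnegative, so their sum is at least `δ`
        have h3 := Finset.single_le_sum (f := fun i => q i - p i)
          (s := Finset.univ.filter (fun i => i ≤ m))
          (fun i hi => sub_nonneg.mpr (hkmin i
            ((Finset.mem_filter.mp hi).2.trans_lt (not_le.mp h1))))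
          (Finset.mem_filter.mpr ⟨Finset.mem_univ j, h2⟩)
        rw [Finset.sum_sub_distrib] at h3
        linarith
      · simp only [h1, h2, if_false]; linarith
    have hsum' : ∑ i, p i = ∑ i, q' i := by
      rw [hq'sum]; simp [hsum]
    have key := h2 (q' j) hjJ (q' k) hkJ (q j) (hq j) (q k) (hq k) (by linarith) (by linarith)
      (by linarith) (by linarith)
    have hprod : ∀ (r : Fin n → ℝ) (x : ℝ), ∏ i, H (r i) x =
        H (r j) x * H (r k) x * ∏ i ∈ (Finset.univ.erase j).erase k, H (r i) x := fun r x => by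
      rw [mul_assoc, Finset.mul_prod_erase _ (fun i => H (r i) x) (by simp [hjk.ne']),
        Finset.mul_prod_erase _ (fun i => H (r i) x) (Finset.mem_univ j)]
    have hrest : CompletelyMonotonicOn
        (fun x => ∏ i ∈ (Finset.univ.erase j).erase k, H (q i) x) :=
      CompletelyMonotonicOn.prod _ fun i _ => hH _ (hq i)
    convert (key.mul hrest).add (ih q' hq'J hcard hpre' hsum') using 2 with x
    have hrest' : ∏ i ∈ (Finset.univ.erase j).erase k, H (q' i) x =
        ∏ i ∈ (Finset.univ.erase j).erase k, H (q i) x :=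
      Finset.prod_congr rfl fun i hi => by
        simp only [Finset.mem_erase] at hi
        rw [hq'i i hi.2.1 hi.1]
    rw [hprod q x, hprod q' x, hrest']
    ring

/-! ### Laplace transforms of comparable measures -/

/-- If `μ ≤ ν` are measures on `(0, ∞)`, then the Laplace transform of `ν - μ` is completely
monotonic. Smoothness and the formula for the derivatives are those of the moment generating
function, evaluated at `-x`. -/
lemma completelyMonotonicOn_laplace_sub {μ ν : Measure ℝ} (hle : μ ≤ ν) (hν0 : ν (Set.Iic 0) = 0)
    (hint : ∀ x > 0, Integrable (fun t => Real.exp (-x * t)) ν) :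
    CompletelyMonotonicOn (fun x => (∫ t, Real.exp (-x * t) ∂ν) - ∫ t, Real.exp (-x * t) ∂μ) := by
  have hsub : ∀ {ρ : Measure ℝ}, ρ ≤ ν → ∀ x : ℝ, 0 < x →
      -x ∈ interior (ProbabilityTheory.integrableExpSet id ρ) := fun {ρ} hρ x hx => by
    refine mem_interior.mpr ⟨Set.Iio 0, fun y hy => ?_, isOpen_Iio, by simpa using hx⟩
    have := (hint (-y) (by simpa using hy)).mono_measure hρ
    simpa [ProbabilityTheory.integrableExpSet] using this
  have hmgf : ∀ ρ : Measure ℝ, (fun x => ∫ t, Real.exp (-x * t) ∂ρ) =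
      fun x => ProbabilityTheory.mgf id ρ (-x) := fun ρ => rfl
  have hsmooth : ∀ {ρ : Measure ℝ}, ρ ≤ ν →
      ContDiffOn ℝ (⊤ : ℕ∞) (fun x => ∫ t, Real.exp (-x * t) ∂ρ) (Set.Ioi 0) := fun {ρ} hρ => by
    rw [hmgf]
    intro x hx
    refine ContDiffAt.contDiffWithinAt ?_
    exact (ProbabilityTheory.analyticAt_mgf (hsub hρ x hx)).contDiffAt.comp x contDiff_neg.contDiffAt
  have hderiv : ∀ {ρ : Measure ℝ}, ρ ≤ ν → ∀ (m : ℕ) (x : ℝ), 0 < x →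
      iteratedDerivWithin m (fun x => ∫ t, Real.exp (-x * t) ∂ρ) (Set.Ioi 0) x =
        (-1) ^ m * ∫ t, t ^ m * Real.exp (-x * t) ∂ρ := fun {ρ} hρ m x hx => by
    rw [iteratedDerivWithin_of_isOpen isOpen_Ioi hx, hmgf,
      iteratedDeriv_comp_neg m (ProbabilityTheory.mgf id ρ) x,
      ProbabilityTheory.iteratedDeriv_mgf (hsub hρ x hx)]
    simp
  refine ⟨(hsmooth le_rfl).sub (hsmooth hle), fun m x hx => ?_⟩
  have hx' : x ∈ Set.Ioi (0 : ℝ) := hx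
  have := iteratedDerivWithin_sub (n := m) hx' isOpen_Ioi.uniqueDiffOn
    ((hsmooth le_rfl x hx').of_le (by exact_mod_cast le_top))
    ((hsmooth hle x hx').of_le (by exact_mod_cast le_top))
  change 0 ≤ (-1 : ℝ) ^ m * iteratedDerivWithin m ((fun x => ∫ t, Real.exp (-x * t) ∂ν) -
    fun x => ∫ t, Real.exp (-x * t) ∂μ) (Set.Ioi 0) x
  rw [this, hderiv le_rfl m x hx, hderiv hle m x hx, ← mul_sub, ← mul_assoc, ← pow_add,
    Even.neg_one_pow ⟨m, rfl⟩, one_mul, sub_nonneg]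
  refine integral_mono_measure hle ?_ ?_
  · have : ∀ᵐ t ∂ν, t ∉ Set.Iic (0 : ℝ) := measure_eq_zero_iff_ae_notMem.mp hν0
    filter_upwards [this] with t ht
    have : 0 < t := not_le.mp ht
    simp only [Pi.zero_apply]
    positivity
  · exact ProbabilityTheory.integrable_pow_mul_exp_of_mem_interior_integrableExpSet
      (X := id) (hsub le_rfl x hx) m

/-! ### Comparison of symmetrized Beta integrals -/

/-- The symmetrized monomial `t ^ a * u ^ b + t ^ b * u ^ a`. -/
noncomputable def symMono (a b t u : ℝ) : ℝ := t ^ a * u ^ b + t ^ b * u ^ a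

lemma symMono_comm (a b t u : ℝ) : symMono a b u t = symMono a b t u := by
  unfold symMono; ring

lemma symMono_nonneg (a b : ℝ) {t u : ℝ} (ht : 0 < t) (hu : 0 < u) : 0 ≤ symMono a b t u := by
  unfold symMono; positivity

lemma symMono_eq_cosh (a b : ℝ) {t u : ℝ} (ht : 0 < t) (hu : 0 < u) :
    symMono a b t u = 2 * Real.exp ((a + b) / 2 * (Real.log t + Real.log u)) *
      Real.cosh ((a - b) / 2 * (Real.log t - Real.log u)) := by
  rw [symMono, Real.cosh_eq, Real.rpow_def_of_pos ht, Real.rpow_def_of_pos hu,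
    Real.rpow_def_of_pos ht, Real.rpow_def_of_pos hu, ← Real.exp_add, ← Real.exp_add]
  have h : ∀ A B C : ℝ, 2 * Real.exp A * ((Real.exp B + Real.exp C) / 2) =
      Real.exp (A + B) + Real.exp (A + C) := fun A B C => by
    rw [Real.exp_add, Real.exp_add]; ring
  rw [h]
  congr 2 <;> ring

/-- The quotient `cosh (B * y) / cosh (A * y)` increases with `y ≥ 0` when `0 ≤ A ≤ B`. -/
lemma cosh_mul_cosh_le {A B y z : ℝ} (hA : 0 ≤ A) (hAB : A ≤ B) (hz : 0 ≤ z) (hzy : z ≤ y) :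
    Real.cosh (B * z) * Real.cosh (A * y) ≤ Real.cosh (B * y) * Real.cosh (A * z) := by
  have h : ∀ u v : ℝ, Real.cosh u * Real.cosh v =
      (Real.cosh (u + v) + Real.cosh (u - v)) / 2 := fun u v => by
    rw [Real.cosh_add, Real.cosh_sub]; ring
  rw [h, h]
  have h1 : 0 ≤ (B - A) * (y - z) := mul_nonneg (by linarith) (by linarith)
  have h2 : 0 ≤ (B + A) * (y - z) := mul_nonneg (by linarith) (by linarith)
  have h3 : 0 ≤ (B - A) * (y + z) := mul_nonneg (by linarith) (by linarith)
  have h4 : 0 ≤ B * z := mul_nonneg (by linarith) hz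
  have h5 : 0 ≤ A * y := mul_nonneg hA (by linarith)
  have c1 : Real.cosh (B * z + A * y) ≤ Real.cosh (B * y + A * z) := by
    rw [Real.cosh_le_cosh, abs_of_nonneg (by linarith), abs_of_nonneg (by nlinarith)]
    nlinarith
  have c2 : Real.cosh (B * z - A * y) ≤ Real.cosh (B * y - A * z) := by
    rw [Real.cosh_le_cosh, abs_of_nonneg (a := B * y - A * z) (by nlinarith), abs_le]
    constructor <;> nlinarith
  linarith

/-- When `(b₁, b₂)` is more spread out than `(a₁, a₂)`, the quotient of the symmetrized monomials
grows as the pair of arguments is spread out. -/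
lemma symMono_mul_le {a₁ a₂ b₁ b₂ : ℝ} (h21 : a₂ ≤ a₁) (h11 : a₁ ≤ b₁) (hs : a₁ + a₂ = b₁ + b₂)
    {t u s v : ℝ} (hu : 0 < u) (hus : u ≤ s) (hst : s ≤ t) (h : t + u = s + v) :
    symMono b₁ b₂ s v * symMono a₁ a₂ t u ≤ symMono b₁ b₂ t u * symMono a₁ a₂ s v := by
  have hs0 : 0 < s := by linarith
  have ht0 : 0 < t := by linarith
  have hv0 : 0 < v := by linarith
  have l1 := Real.log_le_log hu hus
  have l2 := Real.log_le_log hs0 hst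
  have l3 := Real.log_le_log hu (show u ≤ v by linarith)
  have l4 := Real.log_le_log hv0 (show v ≤ t by linarith)
  rw [symMono_eq_cosh _ _ hs0 hv0, symMono_eq_cosh _ _ hs0 hv0, symMono_eq_cosh _ _ ht0 hu,
    symMono_eq_cosh _ _ ht0 hu, hs]
  have habs : ∀ A y : ℝ, 0 ≤ A → Real.cosh (A * y) = Real.cosh (A * |y|) := fun A y hA => by
    rw [← Real.cosh_abs, abs_mul, abs_of_nonneg hA]
  have key := cosh_mul_cosh_le (A := (a₁ - a₂) / 2) (B := (b₁ - b₂) / 2)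
    (y := |Real.log t - Real.log u|) (z := |Real.log s - Real.log v|)
    (by linarith) (by linarith) (abs_nonneg _) (by
      rw [abs_of_nonneg (a := Real.log t - Real.log u) (by linarith), abs_le]
      constructor <;> linarith)
  rw [← habs _ _ (by linarith), ← habs _ _ (by linarith), ← habs _ _ (by linarith),
    ← habs _ _ (by linarith)] at key
  have := mul_le_mul_of_nonneg_left key
    (show 0 ≤ 2 * Real.exp ((b₁ + b₂) / 2 * (Real.log s + Real.log v)) *
      (2 * Real.exp ((b₁ + b₂) / 2 * (Real.log t + Real.log u))) by positivity)
  nlinarith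

/-- For log-convex `g`, the product `g s * g v` grows as the pair `(s, v)` is spread out. -/
lemma mul_le_mul_of_log_convex {g : ℝ → ℝ} (hg : ∀ t > 0, 0 < g t)
    (hconv : ConvexOn ℝ (Set.Ioi 0) (fun t => Real.log (g t)))
    {t u s v : ℝ} (hu : 0 < u) (hus : u ≤ s) (hst : s ≤ t) (h : t + u = s + v) :
    g s * g v ≤ g t * g u := by
  have hs0 : 0 < s := by linarith
  have ht0 : 0 < t := by linarith
  have hv0 : 0 < v := by linarith
  have hmem : s ∈ segment ℝ u t := by
    rw [segment_eq_Icc (hus.trans hst)]; exact ⟨hus, hst⟩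
  obtain ⟨α, β, hα, hβ, hαβ, hseq⟩ := hmem
  simp only [smul_eq_mul] at hseq
  have hveq : β * u + α * t = v := by
    have : (α + β) * (u + t) = u + t := by rw [hαβ, one_mul]
    nlinarith
  have c1 := hconv.2 (x := u) hu (y := t) ht0 hα hβ hαβ
  have c2 := hconv.2 (x := u) hu (y := t) ht0 hβ hα (by linarith)
  simp only [smul_eq_mul] at c1 c2
  rw [hseq] at c1
  rw [hveq] at c2
  rw [← Real.log_le_log_iff (mul_pos (hg s hs0) (hg v hv0)) (mul_pos (hg t ht0) (hg u hu)),
    Real.log_mul (hg s hs0).ne' (hg v hv0).ne', Real.log_mul (hg t ht0).ne' (hg u hu).ne']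
  have : (α + β) * (Real.log (g u) + Real.log (g t)) = Real.log (g u) + Real.log (g t) := by
    rw [hαβ, one_mul]
  nlinarith

/-- On `(0, r)`, the quotient of symmetrized monomials and the symmetrized log-convex factor are
similarly ordered: both increase with the distance to `r / 2`. This is the pointwise form of
Chebyshev's association inequality, arranged so that all terms are nonnegative. -/
lemma chebyshev_pointwise {a₁ a₂ b₁ b₂ : ℝ} (h21 : a₂ ≤ a₁) (h11 : a₁ ≤ b₁)
    (hs : a₁ + a₂ = b₁ + b₂) {g : ℝ → ℝ} (hg : ∀ t > 0, 0 < g t)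
    (hconv : ConvexOn ℝ (Set.Ioi 0) (fun t => Real.log (g t)))
    {r t s : ℝ} (ht : t ∈ Set.Ioo 0 r) (hsr : s ∈ Set.Ioo 0 r) :
    symMono b₁ b₂ t (r - t) * (symMono a₁ a₂ s (r - s) * (g s * g (r - s))) +
      symMono a₁ a₂ t (r - t) * (g t * g (r - t)) * symMono b₁ b₂ s (r - s) ≤
    symMono a₁ a₂ t (r - t) * (symMono b₁ b₂ s (r - s) * (g s * g (r - s))) +
      symMono b₁ b₂ t (r - t) * (g t * g (r - t)) * symMono a₁ a₂ s (r - s) := by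
  have aux : ∀ {t u s v : ℝ}, 0 < u → u ≤ s → s ≤ t → t + u = s + v →
      0 ≤ (symMono b₁ b₂ t u * symMono a₁ a₂ s v - symMono b₁ b₂ s v * symMono a₁ a₂ t u) *
        (g t * g u - g s * g v) := fun hu hus hst h =>
    mul_nonneg (sub_nonneg.mpr (symMono_mul_le h21 h11 hs hu hus hst h))
      (sub_nonneg.mpr (mul_le_mul_of_log_convex hg hconv hu hus hst h))
  obtain ⟨ht0, htr⟩ := ht
  obtain ⟨hs0, hsr⟩ := hsr
  have h0 : ∀ t s : ℝ, 0 < t → t < r → (r - t ≤ s ∧ s ≤ t ∨ t ≤ s ∧ s ≤ r - t) →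
      0 ≤ (symMono b₁ b₂ t (r - t) * symMono a₁ a₂ s (r - s) -
          symMono b₁ b₂ s (r - s) * symMono a₁ a₂ t (r - t)) *
        (g t * g (r - t) - g s * g (r - s)) := fun t s ht0 htr h => by
    rcases h with ⟨h1, h2⟩ | ⟨h1, h2⟩
    · exact aux (by linarith) h1 h2 (by ring)
    · have := aux (t := r - t) (u := t) (s := s) (v := r - s) ht0 h1 h2 (by ring)
      rwa [symMono_comm b₁ b₂ t, symMono_comm a₁ a₂ t, mul_comm (g (r - t))] at this
  have hcases : (r - t ≤ s ∧ s ≤ t ∨ t ≤ s ∧ s ≤ r - t) ∨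
      (r - s ≤ t ∧ t ≤ s ∨ s ≤ t ∧ t ≤ r - s) := by
    rcases le_total t s with h1 | h1 <;> rcases le_total (t + s) r with h2 | h2
    · exact Or.inl (Or.inr ⟨h1, by linarith⟩)
    · exact Or.inr (Or.inl ⟨by linarith, h1⟩)
    · exact Or.inr (Or.inr ⟨h1, by linarith⟩)
    · exact Or.inl (Or.inl ⟨by linarith, h1⟩)
  rcases hcases with h | h
  · linarith [h0 t s ht0 htr h]
  · linarith [h0 s t hs0 hsr h]

/-- Integrated form of Chebyshev's association inequality: `∫ B * ∫ A G ≤ ∫ A * ∫ B G` whenever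
`B / A` and `G` are similarly ordered. -/
lemma lintegral_chebyshev {ρ : Measure ℝ} {S : Set ℝ} (hS : ∀ᵐ t ∂ρ, t ∈ S)
    {A B X Y : ℝ → ENNReal} (hA : AEMeasurable A ρ) (hB : AEMeasurable B ρ)
    (hX : AEMeasurable X ρ) (hY : AEMeasurable Y ρ)
    (h : ∀ t ∈ S, ∀ s ∈ S, B t * X s + X t * B s ≤ A t * Y s + Y t * A s) :
    (∫⁻ t, B t ∂ρ) * ∫⁻ t, X t ∂ρ ≤ (∫⁻ t, A t ∂ρ) * ∫⁻ t, Y t ∂ρ := by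
  have expand : ∀ {P Q : ℝ → ENNReal}, AEMeasurable P ρ → AEMeasurable Q ρ →
      ∫⁻ t, ∫⁻ s, (P t * Q s + Q t * P s) ∂ρ ∂ρ = 2 * ((∫⁻ t, P t ∂ρ) * ∫⁻ t, Q t ∂ρ) :=
    fun {P Q} hP hQ => by
      have : ∀ t, ∫⁻ s, (P t * Q s + Q t * P s) ∂ρ =
          P t * (∫⁻ s, Q s ∂ρ) + Q t * ∫⁻ s, P s ∂ρ := fun t => by
        rw [lintegral_add_left' (hQ.const_mul _), lintegral_const_mul'' _ hQ,
          lintegral_const_mul'' _ hP]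
      simp_rw [this]
      rw [lintegral_add_left' (hP.mul_const _), lintegral_mul_const'' _ hP,
        lintegral_mul_const'' _ hQ]
      ring
  have hle : ∫⁻ t, ∫⁻ s, (B t * X s + X t * B s) ∂ρ ∂ρ ≤
      ∫⁻ t, ∫⁻ s, (A t * Y s + Y t * A s) ∂ρ ∂ρ := by
    refine lintegral_mono_ae ?_
    filter_upwards [hS] with t ht
    refine lintegral_mono_ae ?_
    filter_upwards [hS] with s hs
    exact h t ht s hs
  rw [expand hB hX, expand hA hY] at hle
  exact (ENNReal.mul_le_mul_iff_right (by norm_num) (by norm_num)).mp hle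

lemma lintegral_mono_beta {a b r : ℝ} (ha : -1 < a) (hb : -1 < b) (hr : 0 < r) :
    ∫⁻ t in Set.Ioo 0 r, ENNReal.ofReal (t ^ a * (r - t) ^ b) =
      ENNReal.ofReal (r ^ (a + b + 1) * ProbabilityTheory.beta (a + 1) (b + 1)) := by
  have hα : 0 < a + 1 := by linarith
  have hβ : 0 < b + 1 := by linarith
  have hB := ProbabilityTheory.beta_pos hα hβ
  have himg : (fun x : ℝ => r * x) '' Set.Ioo 0 1 = Set.Ioo 0 r := by
    simpa using Set.image_mul_left_Ioo hr 0 1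
  rw [← himg, lintegral_image_eq_lintegral_abs_deriv_mul measurableSet_Ioo (f' := fun _ => r)
    (fun x _ => by simpa using ((hasDerivAt_id x).const_mul r).hasDerivWithinAt)
    ((mul_right_injective₀ hr.ne').injOn)]
  have h1 := ProbabilityTheory.lintegral_betaPDF_eq_one hα hβ
  rw [ProbabilityTheory.lintegral_betaPDF] at h1
  have h2 : ∀ x ∈ Set.Ioo (0 : ℝ) 1,
      ENNReal.ofReal |r| * ENNReal.ofReal ((r * x) ^ a * (r - r * x) ^ b) =
      ENNReal.ofReal (r ^ (a + b + 1) * ProbabilityTheory.beta (a + 1) (b + 1)) *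
        ENNReal.ofReal (1 / ProbabilityTheory.beta (a + 1) (b + 1) * x ^ (a + 1 - 1) *
          (1 - x) ^ (b + 1 - 1)) := fun x hx => by
    have hx1 : 0 ≤ 1 - x := by linarith [hx.2]
    rw [← ENNReal.ofReal_mul (abs_nonneg r), ← ENNReal.ofReal_mul (by positivity),
      abs_of_pos hr, Real.mul_rpow hr.le hx.1.le, show r - r * x = r * (1 - x) by ring,
      Real.mul_rpow hr.le hx1, Real.rpow_add hr, Real.rpow_add hr, Real.rpow_one]
    congr 1
    simp only [add_sub_cancel_right]
    field_simp
  rw [setLIntegral_congr_fun measurableSet_Ioo h2, lintegral_const_mul' _ _ (by simp), h1, mul_one]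

lemma lintegral_symMono {a b r : ℝ} (ha : -1 < a) (hb : -1 < b) (hr : 0 < r) :
    ∫⁻ t in Set.Ioo 0 r, ENNReal.ofReal (symMono a b t (r - t)) =
      ENNReal.ofReal (2 * (r ^ (a + b + 1) * ProbabilityTheory.beta (a + 1) (b + 1))) := by
  have h1 : ∀ t ∈ Set.Ioo 0 r, ENNReal.ofReal (symMono a b t (r - t)) =
      ENNReal.ofReal (t ^ a * (r - t) ^ b) + ENNReal.ofReal (t ^ b * (r - t) ^ a) :=
    fun t ht => by
      have h2 : 0 < r - t := by linarith [ht.2]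
      have h3 := ht.1
      rw [symMono, ENNReal.ofReal_add (by positivity) (by positivity)]
  have hB := ProbabilityTheory.beta_pos (show 0 < a + 1 by linarith) (show 0 < b + 1 by linarith)
  rw [setLIntegral_congr_fun measurableSet_Ioo h1, lintegral_add_left (by fun_prop),
    lintegral_mono_beta ha hb hr, lintegral_mono_beta hb ha hr, two_mul,
    ENNReal.ofReal_add (by positivity) (by positivity), add_comm b a,
    show ProbabilityTheory.beta (b + 1) (a + 1) = ProbabilityTheory.beta (a + 1) (b + 1) by
      simp only [ProbabilityTheory.beta, add_comm (b + 1) (a + 1), mul_comm]]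

/-! ### The two-factor inequality -/

/-- The density `t ^ p * f t` on `(0, ∞)`, extended by zero, whose Laplace transform is
`LapF f p`. -/
noncomputable def lapDensity (f : ℝ → ℝ) (p : ℝ) : ℝ → ENNReal :=
  (Set.Ioi 0).indicator (fun t => ENNReal.ofReal (t ^ p * f t))

lemma measurable_lapDensity {f : ℝ → ℝ} (hfc : ContinuousOn f (Set.Ioi 0)) (p : ℝ) :
    Measurable (lapDensity f p) := by
  classical
  rw [lapDensity, ← Set.piecewise_eq_indicator]
  refine ContinuousOn.measurable_piecewise ?_ continuousOn_const measurableSet_Ioi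
  refine ENNReal.continuous_ofReal.comp_continuousOn (ContinuousOn.mul ?_ hfc)
  exact fun t ht => (Real.continuousAt_rpow_const t p (Or.inl (ne_of_gt ht))).continuousWithinAt

lemma lapDensity_lt_top (f : ℝ → ℝ) (p t : ℝ) : lapDensity f p t < ⊤ := by
  unfold lapDensity Set.indicator
  split_ifs <;> simp

lemma lconvolution_lapDensity {f : ℝ → ℝ} (hfpos : ∀ t > 0, 0 < f t) (p q r : ℝ) :
    (lapDensity f p ⋆ₗ[volume] lapDensity f q) r =
      ∫⁻ t in Set.Ioo 0 r, ENNReal.ofReal (t ^ p * f t * ((r - t) ^ q * f (r - t))) := by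
  rw [lconvolution_def, ← lintegral_indicator measurableSet_Ioo]
  congr 1 with t
  simp only [lapDensity, Set.indicator, Set.mem_Ioi, Set.mem_Ioo, neg_add_eq_sub, sub_pos]
  by_cases h1 : 0 < t <;> by_cases h2 : t < r <;> simp only [h1, h2, if_true, if_false, and_true,
    and_false, and_self, zero_mul, mul_zero]
  have := hfpos t h1
  rw [← ENNReal.ofReal_mul (by positivity)]

lemma aemeasurable_rpow_mul {f : ℝ → ℝ} (hfc : ContinuousOn f (Set.Ioi 0)) (p q r : ℝ) :
    AEMeasurable (fun t => t ^ p * f t * ((r - t) ^ q * f (r - t)))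
      (volume.restrict (Set.Ioo 0 r)) := by
  have h1 : ContinuousOn f (Set.Ioo 0 r) := hfc.mono fun t ht => ht.1
  have h2 : ContinuousOn (fun t => f (r - t)) (Set.Ioo 0 r) :=
    hfc.comp (by fun_prop) fun t ht => sub_pos.mpr ht.2
  have h3 : Measurable fun t : ℝ => t ^ p := by fun_prop
  have h4 : Measurable fun t : ℝ => (r - t) ^ q := by fun_prop
  exact (h3.aemeasurable.mul (h1.aemeasurable measurableSet_Ioo)).mul
    (h4.aemeasurable.mul (h2.aemeasurable measurableSet_Ioo))

/-- The convolution of two of the densities, written with the log-convex factor `g t = t ^ θ * f t`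
split off and symmetrized under `t ↦ r - t`. -/
lemma two_mul_lconvolution_lapDensity {f : ℝ → ℝ} (hfc : ContinuousOn f (Set.Ioi 0))
    (hfpos : ∀ t > 0, 0 < f t) (θ p q r : ℝ) :
    2 * (lapDensity f p ⋆ₗ[volume] lapDensity f q) r =
      ∫⁻ t in Set.Ioo 0 r, ENNReal.ofReal (symMono (p - θ) (q - θ) t (r - t) *
        (t ^ θ * f t * ((r - t) ^ θ * f (r - t)))) := by
  have hmeas : ∀ p q : ℝ, AEMeasurable
      (fun t => ENNReal.ofReal (t ^ p * f t * ((r - t) ^ q * f (r - t))))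
      (volume.restrict (Set.Ioo 0 r)) := fun p q =>
    (aemeasurable_rpow_mul hfc p q r).ennreal_ofReal
  rw [two_mul]
  nth_rewrite 2 [lconvolution_comm]
  rw [lconvolution_lapDensity hfpos, lconvolution_lapDensity hfpos,
    ← lintegral_add_left' (hmeas p q)]
  refine setLIntegral_congr_fun measurableSet_Ioo fun t ht => ?_
  have h1 : 0 < t := ht.1
  have h2 : 0 < r - t := sub_pos.mpr ht.2
  have h3 := hfpos t h1
  have h4 := hfpos _ h2
  rw [← ENNReal.ofReal_add (by positivity) (by positivity), symMono]
  congr 1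
  have e : ∀ x : ℝ, 0 < x → ∀ s : ℝ, x ^ s = x ^ (s - θ) * x ^ θ := fun x hx s => by
    rw [← Real.rpow_add hx]; congr 1; ring
  rw [e t h1 p, e t h1 q, e _ h2 p, e _ h2 q]
  ring

/-- Pointwise comparison of the two convolution densities at total `r`. Chebyshev's inequality
bounds their ratio by a ratio of Beta integrals over `(0, r)`; since `a₁ + a₂ = b₁ + b₂`, the powers
of `r` and the denominators of the Beta values cancel and only the four Gamma values remain. -/
lemma lconvolution_lapDensity_le {f : ℝ → ℝ} (hfc : ContinuousOn f (Set.Ioi 0))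
    (hfpos : ∀ t > 0, 0 < f t) {θ : ℝ}
    (hconv : ConvexOn ℝ (Set.Ioi 0) (fun t => Real.log (t ^ θ * f t)))
    {a₁ a₂ b₁ b₂ : ℝ} (hb2 : θ - 1 < b₂) (h22 : b₂ ≤ a₂) (h21 : a₂ ≤ a₁) (h11 : a₁ ≤ b₁)
    (hs : a₁ + a₂ = b₁ + b₂) (r : ℝ) :
    (lapDensity f a₁ ⋆ₗ[volume] lapDensity f a₂) r ≤
      ENNReal.ofReal (Real.Gamma (a₁ - θ + 1) * Real.Gamma (a₂ - θ + 1) /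
        (Real.Gamma (b₁ - θ + 1) * Real.Gamma (b₂ - θ + 1))) *
        (lapDensity f b₁ ⋆ₗ[volume] lapDensity f b₂) r := by
  rcases le_or_gt r 0 with hr | hr
  · rw [lconvolution_lapDensity hfpos, Set.Ioo_eq_empty (not_lt.mpr hr)]
    simp
  set g : ℝ → ℝ := fun t => t ^ θ * f t with hg
  have hgpos : ∀ t > 0, 0 < g t := fun t ht => mul_pos (Real.rpow_pos_of_pos ht θ) (hfpos t ht)
  have hsm : ∀ a b : ℝ, Measurable (fun t => symMono a b t (r - t)) := fun a b => by
    unfold symMono; fun_prop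
  have hG : AEMeasurable (fun t => g t * g (r - t)) (volume.restrict (Set.Ioo 0 r)) :=
    aemeasurable_rpow_mul hfc θ θ r
  have hcheb := lintegral_chebyshev (ρ := volume.restrict (Set.Ioo 0 r)) (S := Set.Ioo 0 r)
    (ae_restrict_mem measurableSet_Ioo)
    (A := fun t => ENNReal.ofReal (symMono (a₁ - θ) (a₂ - θ) t (r - t)))
    (B := fun t => ENNReal.ofReal (symMono (b₁ - θ) (b₂ - θ) t (r - t)))
    (X := fun t => ENNReal.ofReal (symMono (a₁ - θ) (a₂ - θ) t (r - t) * (g t * g (r - t))))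
    (Y := fun t => ENNReal.ofReal (symMono (b₁ - θ) (b₂ - θ) t (r - t) * (g t * g (r - t))))
    (hsm _ _).ennreal_ofReal.aemeasurable (hsm _ _).ennreal_ofReal.aemeasurable
    ((hsm _ _).aemeasurable.mul hG).ennreal_ofReal ((hsm _ _).aemeasurable.mul hG).ennreal_ofReal
    (fun t ht s hs' => by
      have h1 : ∀ a b t : ℝ, t ∈ Set.Ioo 0 r → 0 ≤ symMono a b t (r - t) := fun a b t ht =>
        symMono_nonneg a b ht.1 (sub_pos.mpr ht.2)
      have h2 : ∀ a b t : ℝ, t ∈ Set.Ioo 0 r → 0 ≤ symMono a b t (r - t) * (g t * g (r - t)) :=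
        fun a b t ht => mul_nonneg (h1 a b t ht)
          (mul_pos (hgpos t ht.1) (hgpos _ (sub_pos.mpr ht.2))).le
      rw [← ENNReal.ofReal_mul (h1 _ _ t ht), ← ENNReal.ofReal_mul (h2 _ _ t ht),
        ← ENNReal.ofReal_mul (h1 _ _ t ht), ← ENNReal.ofReal_mul (h2 _ _ t ht),
        ← ENNReal.ofReal_add (mul_nonneg (h1 _ _ t ht) (h2 _ _ s hs'))
          (mul_nonneg (h2 _ _ t ht) (h1 _ _ s hs')),
        ← ENNReal.ofReal_add (mul_nonneg (h1 _ _ t ht) (h2 _ _ s hs'))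
          (mul_nonneg (h2 _ _ t ht) (h1 _ _ s hs'))]
      exact ENNReal.ofReal_le_ofReal (chebyshev_pointwise (by linarith) (by linarith)
        (by linarith) hgpos hconv ht hs'))
  rw [← two_mul_lconvolution_lapDensity hfc hfpos, ← two_mul_lconvolution_lapDensity hfc hfpos,
    lintegral_symMono (by linarith) (by linarith) hr,
    lintegral_symMono (by linarith) (by linarith) hr] at hcheb
  have G1 := Real.Gamma_pos_of_pos (show 0 < a₁ - θ + 1 by linarith)
  have G2 := Real.Gamma_pos_of_pos (show 0 < a₂ - θ + 1 by linarith)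
  have G3 := Real.Gamma_pos_of_pos (show 0 < b₁ - θ + 1 by linarith)
  have G4 := Real.Gamma_pos_of_pos (show 0 < b₂ - θ + 1 by linarith)
  have G5 := Real.Gamma_pos_of_pos (show 0 < a₁ - θ + 1 + (a₂ - θ + 1) by linarith)
  have hβ := ProbabilityTheory.beta_pos (show 0 < b₁ - θ + 1 by linarith)
    (show 0 < b₂ - θ + 1 by linarith)
  set D := 2 * (r ^ (b₁ - θ + (b₂ - θ) + 1) *
    ProbabilityTheory.beta (b₁ - θ + 1) (b₂ - θ + 1)) with hD
  have hDpos : 0 < D := by positivity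
  have hDa : 2 * (r ^ (a₁ - θ + (a₂ - θ) + 1) *
      ProbabilityTheory.beta (a₁ - θ + 1) (a₂ - θ + 1)) =
      D * (Real.Gamma (a₁ - θ + 1) * Real.Gamma (a₂ - θ + 1) /
        (Real.Gamma (b₁ - θ + 1) * Real.Gamma (b₂ - θ + 1))) := by
    rw [hD, ProbabilityTheory.beta, ProbabilityTheory.beta,
      show b₁ - θ + (b₂ - θ) = a₁ - θ + (a₂ - θ) by linarith,
      show b₁ - θ + 1 + (b₂ - θ + 1) = a₁ - θ + 1 + (a₂ - θ + 1) by linarith]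
    field_simp
  rw [hDa, ENNReal.ofReal_mul hDpos.le, mul_assoc] at hcheb
  have h1 := (ENNReal.mul_le_mul_iff_right (by simpa using hDpos) (by simp)).mp hcheb
  rw [mul_left_comm] at h1
  exact (ENNReal.mul_le_mul_iff_right (by norm_num) (by norm_num)).mp h1

/-- The measure on `(0, ∞)` with density `t ^ p * f t`. -/
noncomputable def lapMeasure (f : ℝ → ℝ) (p : ℝ) : Measure ℝ :=
  volume.withDensity (lapDensity f p)

instance (f : ℝ → ℝ) (p : ℝ) : SFinite (lapMeasure f p) := by
  unfold lapMeasure; infer_instance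

lemma lapMeasure_Iic (f : ℝ → ℝ) (p : ℝ) : lapMeasure f p (Set.Iic 0) = 0 := by
  rw [lapMeasure, withDensity_apply _ measurableSet_Iic,
    setLIntegral_congr_fun (g := fun _ => 0) measurableSet_Iic fun t ht => by
      simp [lapDensity, not_lt.mpr (Set.mem_Iic.mp ht)]]
  simp

lemma toReal_lapDensity_smul {f : ℝ → ℝ} (hfpos : ∀ t > 0, 0 < f t) (p x : ℝ) :
    (fun t => (lapDensity f p t).toReal • Real.exp (-x * t)) =
      (Set.Ioi 0).indicator (fun t => t ^ p * f t * Real.exp (-x * t)) := by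
  ext t
  by_cases ht : 0 < t
  · have := hfpos t ht
    simp only [lapDensity, Set.indicator, Set.mem_Ioi, ht, if_true, smul_eq_mul]
    rw [ENNReal.toReal_ofReal (by positivity)]
  · simp [lapDensity, ht]

lemma integral_lapMeasure {f : ℝ → ℝ} (hfc : ContinuousOn f (Set.Ioi 0))
    (hfpos : ∀ t > 0, 0 < f t) (p x : ℝ) :
    ∫ t, Real.exp (-x * t) ∂(lapMeasure f p) = LapF f p x := by
  rw [lapMeasure, integral_withDensity_eq_integral_toReal_smul (measurable_lapDensity hfc p)
    (Eventually.of_forall (lapDensity_lt_top f p)), toReal_lapDensity_smul hfpos,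
    integral_indicator measurableSet_Ioi, LapF]

lemma integrable_lapMeasure {f : ℝ → ℝ} (hfc : ContinuousOn f (Set.Ioi 0))
    (hfpos : ∀ t > 0, 0 < f t) {p x : ℝ}
    (h : IntegrableOn (fun t => t ^ p * f t * Real.exp (-x * t)) (Set.Ioi 0)) :
    Integrable (fun t => Real.exp (-x * t)) (lapMeasure f p) := by
  rw [lapMeasure, integrable_withDensity_iff_integrable_smul' (measurable_lapDensity hfc p)
    (Eventually.of_forall (lapDensity_lt_top f p)), toReal_lapDensity_smul hfpos,
    integrable_indicator_iff measurableSet_Ioi]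
  exact h

/-- The Laplace transform turns convolution into multiplication. -/
lemma integral_conv_exp (μ ν : Measure ℝ) [SFinite μ] [SFinite ν] (x : ℝ) :
    ∫ t, Real.exp (-x * t) ∂(Measure.conv μ ν) =
      (∫ t, Real.exp (-x * t) ∂μ) * ∫ t, Real.exp (-x * t) ∂ν := by
  rw [Measure.conv, integral_map (by fun_prop) (by fun_prop), ← integral_prod_mul]
  simp_rw [mul_add, Real.exp_add]

lemma integrable_conv_exp {μ ν : Measure ℝ} [SFinite μ] [SFinite ν] {x : ℝ}
    (hμ : Integrable (fun t => Real.exp (-x * t)) μ)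
    (hν : Integrable (fun t => Real.exp (-x * t)) ν) :
    Integrable (fun t => Real.exp (-x * t)) (Measure.conv μ ν) := by
  rw [Measure.conv, integrable_map_measure (by fun_prop) (by fun_prop)]
  convert hμ.mul_prod hν using 2 with z
  simp [mul_add, Real.exp_add, mul_comm]

lemma conv_Iic {μ ν : Measure ℝ} [SFinite μ] [SFinite ν] (hμ : μ (Set.Iic 0) = 0)
    (hν : ν (Set.Iic 0) = 0) : Measure.conv μ ν (Set.Iic 0) = 0 := by
  rw [Measure.conv, Measure.map_apply (by fun_prop) measurableSet_Iic]
  refine measure_mono_null (t := Set.Iic 0 ×ˢ Set.univ ∪ Set.univ ×ˢ Set.Iic 0) ?_ ?_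
  · rintro ⟨a, b⟩ hab
    simp only [Set.mem_preimage, Set.mem_Iic] at hab
    rcases le_or_gt a 0 with h | h
    · exact Or.inl ⟨h, trivial⟩
    · exact Or.inr ⟨trivial, show b ≤ 0 by linarith⟩
  · rw [measure_union_null_iff, Measure.prod_prod, Measure.prod_prod, hμ, hν]
    simp

/-- The case of two factors: the difference is the Laplace transform of a positive measure, because
the convolution of the measures for `a₁, a₂` is at most the stated multiple of that for
`b₁, b₂`. -/
lemma completelyMonotonicOn_two {f : ℝ → ℝ} (hfc : ContinuousOn f (Set.Ioi 0))
    (hfpos : ∀ t > 0, 0 < f t) {θ : ℝ}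
    (hconv : ConvexOn ℝ (Set.Ioi 0) (fun t => Real.log (t ^ θ * f t)))
    {a₁ a₂ b₁ b₂ : ℝ} (hb2 : θ - 1 < b₂) (h22 : b₂ ≤ a₂) (h21 : a₂ ≤ a₁) (h11 : a₁ ≤ b₁)
    (hs : a₁ + a₂ = b₁ + b₂)
    (hi1 : ∀ x > 0, IntegrableOn (fun t => t ^ b₁ * f t * Real.exp (-x * t)) (Set.Ioi 0))
    (hi2 : ∀ x > 0, IntegrableOn (fun t => t ^ b₂ * f t * Real.exp (-x * t)) (Set.Ioi 0)) :
    CompletelyMonotonicOn (fun x =>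
      Real.Gamma (a₁ - θ + 1) * Real.Gamma (a₂ - θ + 1) /
        (Real.Gamma (b₁ - θ + 1) * Real.Gamma (b₂ - θ + 1)) * (LapF f b₁ x * LapF f b₂ x) -
        LapF f a₁ x * LapF f a₂ x) := by
  have G1 := Real.Gamma_pos_of_pos (show 0 < a₁ - θ + 1 by linarith)
  have G2 := Real.Gamma_pos_of_pos (show 0 < a₂ - θ + 1 by linarith)
  have G3 := Real.Gamma_pos_of_pos (show 0 < b₁ - θ + 1 by linarith)
  have G4 := Real.Gamma_pos_of_pos (show 0 < b₂ - θ + 1 by linarith)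
  set c := Real.Gamma (a₁ - θ + 1) * Real.Gamma (a₂ - θ + 1) /
        (Real.Gamma (b₁ - θ + 1) * Real.Gamma (b₂ - θ + 1)) with hc
  have hcpos : 0 < c := by positivity
  have hm := measurable_lapDensity hfc
  have hle : Measure.conv (lapMeasure f a₁) (lapMeasure f a₂) ≤
      ENNReal.ofReal c • Measure.conv (lapMeasure f b₁) (lapMeasure f b₂) := by
    simp only [lapMeasure]
    rw [conv_withDensity_eq_lconvolution (hm _) (hm _),
      conv_withDensity_eq_lconvolution (hm _) (hm _),
      ← withDensity_smul _ (measurable_lconvolution volume (hm _) (hm _))]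
    exact withDensity_mono (Eventually.of_forall fun r =>
      lconvolution_lapDensity_le hfc hfpos hconv hb2 h22 h21 h11 hs r)
  have := completelyMonotonicOn_laplace_sub hle
    (by simp [conv_Iic (lapMeasure_Iic f b₁) (lapMeasure_Iic f b₂)])
    (fun x hx => (integrable_conv_exp (integrable_lapMeasure hfc hfpos (hi1 x hx))
      (integrable_lapMeasure hfc hfpos (hi2 x hx))).smul_measure ENNReal.ofReal_ne_top)
  convert this using 2 with x
  rw [integral_smul_measure, ENNReal.toReal_ofReal hcpos.le, integral_conv_exp, integral_conv_exp]
  simp only [integral_lapMeasure hfc hfpos, smul_eq_mul]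

lemma completelyMonotonicOn_lapF {f : ℝ → ℝ} (hfc : ContinuousOn f (Set.Ioi 0))
    (hfpos : ∀ t > 0, 0 < f t) {p : ℝ}
    (hi : ∀ x > 0, IntegrableOn (fun t => t ^ p * f t * Real.exp (-x * t)) (Set.Ioi 0)) :
    CompletelyMonotonicOn (LapF f p) := by
  have := completelyMonotonicOn_laplace_sub (Measure.zero_le (lapMeasure f p))
    (lapMeasure_Iic f p) (fun x hx => integrable_lapMeasure hfc hfpos (hi x hx))
  simp only [integral_lapMeasure hfc hfpos, integral_zero_measure, sub_zero] at this
  exact this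

theorem stmt1 (I : Set ℝ) (hI : I.OrdConnected) (f : ℝ → ℝ)
    (hfc : ContinuousOn f (Set.Ioi 0)) (hfpos : ∀ t > 0, 0 < f t)
    (hconv : ∀ p ∈ I, ∀ x > 0,
      IntegrableOn (fun t => t ^ p * f t * Real.exp (-x * t)) (Set.Ioi 0))
    (M c : ℝ) (hM : 0 < M) (hc : 0 ≤ c)
    (hbound : ∀ p ∈ I, ∀ t > 0, 0 < t ^ p * f t ∧ t ^ p * f t ≤ M * Real.exp (c * t))
    (n : ℕ) (hn : 2 ≤ n) (p q : Fin n → ℝ)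
    (hpI : ∀ j, p j ∈ I) (hqI : ∀ j, q j ∈ I)
    (hmaj : Majorizes p q)
    (θ : ℝ) (hθ : θ < 1 + min (p ⟨n - 1, by omega⟩) (q ⟨n - 1, by omega⟩))
    (hlogconv : ConvexOn ℝ (Set.Ioi 0) (fun t => Real.log (t ^ θ * f t))) :
    CompletelyMonotonicOn (fun x =>
      (∏ j, Real.Gamma (p j - θ + 1) / Real.Gamma (q j - θ + 1)) * ∏ j, LapF f (q j) x -
        ∏ j, LapF f (p j) x) := by

  obtain ⟨hp, hq, hpre, hsum, -⟩ := hmaj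
  have hlast : ∀ j : Fin n, j ≤ ⟨n - 1, by omega⟩ := fun j => Fin.mk_le_mk.mpr (by omega)
  have hpθ : ∀ j, θ - 1 < p j := fun j => by
    have h1 := hp j _ (hlast j)
    have h2 := min_le_left (p ⟨n - 1, by omega⟩) (q ⟨n - 1, by omega⟩)
    linarith
  have hqθ : ∀ j, θ - 1 < q j := fun j => by
    have h1 := hq j _ (hlast j)
    have h2 := min_le_right (p ⟨n - 1, by omega⟩) (q ⟨n - 1, by omega⟩)
    linarith
  have hΓ : ∀ a : ℝ, θ - 1 < a → 0 < Real.Gamma (a - θ + 1) := fun a ha =>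
    Real.Gamma_pos_of_pos (by linarith)
  -- the normalization by Gamma values makes the constants of the two-factor case multiplicative
  have main := completelyMonotonicOn_prod_sub_prod (J := I ∩ Set.Ioi (θ - 1))
    (hI.inter Set.ordConnected_Ioi) (fun a x => (Real.Gamma (a - θ + 1))⁻¹ * LapF f a x)
    (fun a ha => (completelyMonotonicOn_lapF hfc hfpos (hconv a ha.1)).const_mul
      (inv_nonneg.mpr (hΓ a ha.2).le))
    (fun a₁ ha₁ a₂ ha₂ b₁ hb₁ b₂ hb₂ h22 h21 h11 hs => by
      have G1 := hΓ a₁ ha₁.2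
      have G2 := hΓ a₂ ha₂.2
      have G3 := hΓ b₁ hb₁.2
      have G4 := hΓ b₂ hb₂.2
      have := (completelyMonotonicOn_two hfc hfpos hlogconv hb₂.2 h22 h21 h11 hs
        (hconv b₁ hb₁.1) (hconv b₂ hb₂.1)).const_mul
        (c := (Real.Gamma (a₁ - θ + 1) * Real.Gamma (a₂ - θ + 1))⁻¹) (by positivity)
      convert this using 2 with x
      field_simp)
    p (fun i j h => hp i j h) _ q (fun j => ⟨hqI j, hqθ j⟩) le_rfl hpre hsum
  have hP : 0 < ∏ j, Real.Gamma (p j - θ + 1) := Finset.prod_pos fun j _ => hΓ _ (hpθ j)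
  convert main.const_mul hP.le using 2 with x
  rw [Finset.prod_mul_distrib, Finset.prod_mul_distrib, Finset.prod_inv_distrib,
    Finset.prod_inv_distrib, Finset.prod_div_distrib]
  field_simp
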